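/- Let N be an even positive integer, let μ be a Borel measure on ℝ, and let φ₁,…,φ_N : ℝ → ℝ be μ-integrable measurable functions such that (x₁,…,x_N) ↦ det(φ_j(x_k))_{1≤j,k≤N} is integrable with respect to μ^⊗N over the ordered region {(x₁,…,x_N) : x₁ ≤ x₂ ≤ ⋯ ≤ x_N}. Then ( ∫_{x₁≤x₂≤⋯≤x_N} det(φ_j(x_k))_{1≤j,k≤N} dμ(x₁)⋯dμ(x_N) )² = det( ∫_ℝ∫_ℝ sgn(x−y) φ_j(x) φ_k(y) dμ(x) dμ(y) )_{1≤j,k≤N}. -/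

import Mathlib

open MeasureTheory

/-!
Expanding the determinant and permuting coordinates turns the ordered integral into
`P(φ) = ∫ ε(x) ∏ φ_j(x_j) dμ^N(x)` over the whole space, where `ε(x)` is the sign of the permutation
sorting `x`, or `0` on ties; `P` is alternating in `φ`. The sign satisfies the Pfaffian recursion
`ε(a, x) = ∑_k (-1)^k sgn(x_k - a) ε(x without x_k)` for `x` of odd length: both sides are
antisymmetric in `x`, so only increasing `x` matter, for which it is an alternating sum of signs.
By Fubini, `P` then satisfies the Pfaffian recursion for the alternating form
`B(f, g) = ∬ sgn(x - y) f(x) g(y)`. Finally, `P(φ)^2 = det B(φ_j, φ_k)` follows by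
elimination: both sides are unchanged when multiples of one vector are added to the others, which
reduces to the case where `B(φ_j, φ_0) ≠ 0` for at most one `j`.
-/

section Antisymmetric

variable {α ι G : Type*} [AddCommGroup G]

/-- A function of a family of points that is multiplied by `sign σ` when the points are permuted
by `σ`. No linearity is involved, in contrast to `AlternatingMap`. -/
def IsAntisymmetric [Fintype ι] [DecidableEq ι] (F : (ι → α) → G) : Prop :=
  ∀ (x : ι → α) (σ : Equiv.Perm ι), F (x ∘ σ) = Equiv.Perm.sign σ • F x

theorem isAntisymmetric_sum_sign_smul [Fintype ι] [DecidableEq ι] (f : (ι → α) → G) :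
    IsAntisymmetric fun x => ∑ σ : Equiv.Perm ι, Equiv.Perm.sign σ • f (x ∘ σ) := by
  intro x τ
  simp only [Finset.smul_sum, smul_smul]
  refine Fintype.sum_equiv (Equiv.mulLeft τ) _ _ fun σ => ?_
  rw [Equiv.coe_mulLeft, Equiv.Perm.sign_mul, ← mul_assoc, Int.units_mul_self, one_mul,
    Equiv.Perm.coe_mul, Function.comp_assoc]

theorem IsAntisymmetric.eq_zero_of_not_injective [Fintype ι] [DecidableEq ι] [IsAddTorsionFree G]
    {F : (ι → α) → G} (hF : IsAntisymmetric F) {x : ι → α} (hx : ¬ Function.Injective x) :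
    F x = 0 := by
  obtain ⟨i, j, hij, hne⟩ := Function.not_injective_iff.1 hx
  have hswap : x ∘ Equiv.swap i j = x := by
    rw [Equiv.comp_swap_eq_update, hij, Function.update_eq_self, ← hij, Function.update_eq_self]
  have hneg : F x = -F x := by
    simpa only [hswap, Equiv.Perm.sign_swap hne, Units.neg_smul, one_smul] using
      hF x (Equiv.swap i j)
  exact self_eq_neg.1 hneg

theorem IsAntisymmetric.ext_strictMono [LinearOrder α] [IsAddTorsionFree G] {n : ℕ}
    {F F' : (Fin n → α) → G} (hF : IsAntisymmetric F) (hF' : IsAntisymmetric F')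
    (h : ∀ x, StrictMono x → F x = F' x) : F = F' := by
  funext x
  by_cases hx : Function.Injective x
  · have hsort : StrictMono (x ∘ Tuple.sort x) :=
      (Tuple.monotone_sort x).strictMono_of_injective (hx.comp (Tuple.sort x).injective)
    exact smul_left_cancel _ <| by rw [← hF, ← hF', h _ hsort]
  · rw [hF.eq_zero_of_not_injective hx, hF'.eq_zero_of_not_injective hx]

end Antisymmetric

section SortSign

variable {α β : Type*} [LinearOrder α] [LinearOrder β] {n : ℕ}

/-- The sign of `a - b`, which makes sense in any linear order. -/
def orderSign (a b : α) : ℤ :=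
  if a < b then -1 else if b < a then 1 else 0

theorem orderSign_of_lt {a b : α} (h : a < b) : orderSign a b = -1 :=
  if_pos h

theorem orderSign_of_gt {a b : α} (h : b < a) : orderSign a b = 1 := by
  rw [orderSign, if_neg h.asymm, if_pos h]

theorem orderSign_swap (a b : α) : orderSign a b = -orderSign b a := by
  rcases lt_trichotomy a b with h | rfl | h
  · rw [orderSign_of_lt h, orderSign_of_gt h]
  · simp only [orderSign, lt_irrefl, if_false, neg_zero]
  · rw [orderSign_of_lt h, orderSign_of_gt h, neg_neg]

theorem abs_orderSign_le_one (a b : α) : |orderSign a b| ≤ 1 := by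
  unfold orderSign
  split_ifs <;> decide

theorem orderSign_map {f : α → β} (hf : StrictMono f) (a b : α) :
    orderSign (f a) (f b) = orderSign a b := by
  simp only [orderSign, hf.lt_iff_lt]

theorem cast_orderSign_real (a b : ℝ) : (orderSign a b : ℝ) = Real.sign (a - b) := by
  simp only [orderSign, Real.sign, sub_neg, sub_pos]
  split_ifs <;> norm_num

/-- The sign of the permutation that sorts the tuple `x`, or `0` if `x` has repeated entries. -/
def sortSign (x : Fin n → α) : ℤ :=
  ∏ i, ∏ j ∈ Finset.Ioi i, orderSign (x j) (x i)

theorem abs_sortSign_le_one (x : Fin n → α) : |sortSign x| ≤ 1 := by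
  simp only [sortSign, Finset.abs_prod]
  exact Finset.prod_le_one (fun _ _ => Finset.prod_nonneg fun _ _ => abs_nonneg _) fun _ _ =>
    Finset.prod_le_one (fun _ _ => abs_nonneg _) fun _ _ => abs_orderSign_le_one _ _

theorem isAntisymmetric_sortSign : IsAntisymmetric (sortSign : (Fin n → α) → ℤ) := fun x σ =>
  σ.prod_Ioi_comp_eq_sign_mul_prod (f := fun i j => orderSign (x j) (x i))
    fun _ _ => orderSign_swap _ _

theorem sortSign_of_strictMono {x : Fin n → α} (hx : StrictMono x) : sortSign x = 1 :=
  Finset.prod_eq_one fun _ _ => Finset.prod_eq_one fun _ hi =>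
    orderSign_of_gt (hx (Finset.mem_Ioi.1 hi))

theorem sortSign_comp {f : α → β} (hf : StrictMono f) (x : Fin n → α) :
    sortSign (f ∘ x) = sortSign x := by
  simp only [sortSign, Function.comp_apply, orderSign_map hf]

theorem sortSign_cons (a : α) (x : Fin n → α) :
    sortSign (Fin.cons a x : Fin (n + 1) → α) = (∏ j, orderSign (x j) a) * sortSign x := by
  simp only [sortSign, Fin.prod_univ_succ, Fin.prod_Ioi_zero, Fin.prod_Ioi_succ, Fin.cons_zero,
    Fin.cons_succ]

theorem sum_sign_smul_indicator_monotone (x : Fin n → α) :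
    ∑ σ : Equiv.Perm (Fin n),
      Equiv.Perm.sign σ • Set.indicator {y : Fin n → α | Monotone y} (1 : (Fin n → α) → ℤ) (x ∘ σ)
      = sortSign x := by
  refine congrFun ((isAntisymmetric_sum_sign_smul _).ext_strictMono isAntisymmetric_sortSign
    fun x hx => ?_) x
  have hsort : x ∘ (1 : Equiv.Perm (Fin n)) = x ∘ Tuple.sort x :=
    Tuple.comp_sort_eq_comp_iff_monotone.2 hx.monotone
  have hmono (σ : Equiv.Perm (Fin n)) : Monotone (x ∘ σ) ↔ σ = 1 := by
    rw [← Tuple.comp_sort_eq_comp_iff_monotone, ← hsort, hx.injective.comp_left.eq_iff,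
      DFunLike.coe_fn_eq]
  simp [Set.indicator_apply, hmono, sortSign_of_strictMono hx]

theorem sortSign_insertNth_bot [OrderBot α] (k : Fin (n + 1)) {x : Fin n → α}
    (hx : ∀ j, ⊥ < x j) :
    sortSign (k.insertNth ⊥ x : Fin (n + 1) → α) = (-1) ^ (k : ℕ) * sortSign x := by
  have hcons : sortSign (Fin.cons ⊥ x : Fin (n + 1) → α) = sortSign x := by
    rw [sortSign_cons, Finset.prod_eq_one fun j _ => orderSign_of_gt (hx j), one_mul]
  rw [← Fin.cons_comp_cycleRange, isAntisymmetric_sortSign _ k.cycleRange, hcons,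
    Fin.sign_cycleRange, Units.smul_def, smul_eq_mul, Units.val_pow_eq_pow_val, Units.val_neg,
    Units.val_one]

-- Reading removal as replacement by `⊥` makes the effect of permuting `x` transparent.
theorem sortSign_update_bot (x : Fin (n + 1) → α) (k : Fin (n + 1)) :
    sortSign (Function.update ((↑) ∘ x) k (⊥ : WithBot α)) =
      (-1) ^ (k : ℕ) * sortSign (k.removeNth x) := by
  rw [← Fin.insertNth_removeNth, sortSign_insertNth_bot k fun j => WithBot.bot_lt_coe _,
    ← sortSign_comp WithBot.coe_strictMono (k.removeNth x)]
  rfl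

theorem isAntisymmetric_sum_mul_sortSign_removeNth (f : α → ℤ) :
    IsAntisymmetric fun x : Fin (n + 1) → α =>
      ∑ k : Fin (n + 1), f (x k) * ((-1) ^ (k : ℕ) * sortSign (k.removeNth x)) := by
  intro x σ
  have hupdate (k : Fin (n + 1)) :
      Function.update ((↑) ∘ x ∘ σ) k (⊥ : WithBot α) = Function.update ((↑) ∘ x) (σ k) ⊥ ∘ σ := by
    rw [Function.update_comp_equiv, Equiv.symm_apply_apply, Function.comp_assoc]
  simp only [← sortSign_update_bot, hupdate, isAntisymmetric_sortSign _ σ, mul_smul_comm,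
    ← Finset.smul_sum, Function.comp_apply]
  rw [Equiv.sum_comp σ fun k =>
    f (x k) * sortSign (Function.update ((↑) ∘ x) k (⊥ : WithBot α))]

theorem sum_neg_one_pow_mul_orderSign {x : Fin n → α} (hx : StrictMono x) (a : α) :
    ∑ k : Fin n, (-1) ^ (k : ℕ) * orderSign (x k) a =
      ∏ k, orderSign (x k) a - if Even n then 1 else 0 := by
  induction n with
  | zero => simp
  | succ n ih =>
    have h : orderSign (x (Fin.last n)) a = 1 ∨
        ∏ k : Fin n, orderSign (x k.castSucc) a = (-1) ^ n := by
      rcases lt_or_ge a (x (Fin.last n)) with h | h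
      · exact .inl (orderSign_of_gt h)
      · refine .inr ?_
        rw [Finset.prod_congr rfl fun k _ =>
          orderSign_of_lt ((hx (Fin.castSucc_lt_last k)).trans_le h), Finset.prod_const,
          Finset.card_fin]
    rw [Fin.sum_univ_castSucc, Fin.prod_univ_castSucc]
    simp only [Fin.val_castSucc, Fin.val_last]
    rw [ih (x := fun k => x k.castSucc) (hx.comp Fin.strictMono_castSucc)]
    rcases Nat.even_or_odd n with hn | hn <;> rcases h with h | h <;>
      simp only [h, hn.neg_one_pow, Nat.even_add_one, hn, Nat.not_even_iff_odd.2, not_true,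
        not_false_eq_true, if_true, if_false] <;> ring

theorem sortSign_cons_of_odd (hn : Odd (n + 1)) (a : α) (x : Fin (n + 1) → α) :
    sortSign (Fin.cons a x : Fin (n + 2) → α) =
      ∑ k : Fin (n + 1), orderSign (x k) a * ((-1) ^ (k : ℕ) * sortSign (k.removeNth x)) := by
  have hprod : IsAntisymmetric fun x : Fin (n + 1) → α =>
      (∏ k, orderSign (x k) a) * sortSign x := fun x σ => by
    simp only [isAntisymmetric_sortSign x σ, Function.comp_apply,
      Equiv.prod_comp σ fun k => orderSign (x k) a, mul_smul_comm]
  rw [sortSign_cons]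
  refine congrFun (hprod.ext_strictMono
    (isAntisymmetric_sum_mul_sortSign_removeNth (orderSign · a)) fun x hx => ?_) x
  have hremove (k : Fin (n + 1)) : sortSign (k.removeNth x) = 1 :=
    sortSign_of_strictMono (hx.comp k.strictMono_succAbove)
  simpa only [sortSign_of_strictMono hx, hremove, mul_one, mul_comm (orderSign _ a),
    if_neg (Nat.not_even_iff_odd.2 hn), sub_zero] using (sum_neg_one_pow_mul_orderSign hx a).symm

end SortSign

section PfaffianFamily

theorem alternatingMap_map_add_smul {R V N ι : Type*} [CommSemiring R] [AddCommMonoid V]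
    [Module R V] [AddCommMonoid N] [Module R N] [Finite ι] (f : V [⋀^ι]→ₗ[R] N) (v : ι → V)
    {c : ι → R} {k : ι} (hk : c k = 0) : f (fun i => v i + c i • v k) = f v := by
  classical
  cases nonempty_fintype ι
  have hexpand : f (v + fun i => c i • v k) =
      ∑ s : Finset ι, f (s.piecewise v fun i => c i • v k) :=
    f.toMultilinearMap.map_add_univ v _
  refine hexpand.trans ((Finset.sum_eq_single Finset.univ (fun s _ hs => ?_)
    fun h => absurd (Finset.mem_univ _) h).trans (by rw [Finset.piecewise_univ]))
  obtain ⟨i, hi⟩ : ∃ i, i ∉ s := by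
    simpa only [ne_eq, Finset.eq_univ_iff_forall, not_forall] using hs
  by_cases hks : k ∈ s
  · have hsmul : s.piecewise v (fun i => c i • v k) =
        Function.update (s.piecewise v fun i => c i • v k) i (c i • v k) := by
      rw [eq_comm, Function.update_eq_self_iff, Finset.piecewise_eq_of_notMem _ _ _ hi]
    have hik : i ≠ k := fun h => hi (h ▸ hks)
    rw [hsmul, f.map_update_smul, f.map_eq_zero_of_eq _ _ hik, smul_zero]
    rw [Function.update_self, Function.update_of_ne hik.symm, Finset.piecewise_eq_of_mem _ _ _ hks]
  · exact f.map_coord_zero k (by rw [Finset.piecewise_eq_of_notMem _ _ _ hks, hk, zero_smul])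

theorem det_bilinForm_add_smul {R V ι : Type*} [CommRing R] [AddCommMonoid V] [Module R V]
    [Fintype ι] [DecidableEq ι] (B : LinearMap.BilinForm R V) (v : ι → V) {c : ι → R} {k : ι}
    (hk : c k = 0) :
    (Matrix.of fun i j => B (v i + c i • v k) (v j + c j • v k)).det =
      (Matrix.of fun i j => B (v i) (v j)).det := by
  calc (Matrix.of fun i j => B (v i + c i • v k) (v j + c j • v k)).det
      = (Matrix.of fun i j => B (v i) (v j + c j • v k)).det :=
        Matrix.det_eq_of_forall_row_eq_smul_add_const c k hk fun i j => by simp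
    _ = (Matrix.of fun i j => B (v i) (v j)).det := by
        rw [← Matrix.det_transpose, ← Matrix.det_transpose (Matrix.of fun i j => B (v i) (v j))]
        exact Matrix.det_eq_of_forall_row_eq_smul_add_const c k hk fun i j => by simp

theorem det_eq_neg_mul_mul_det_submatrix {R : Type*} [CommRing R] {n : ℕ}
    (A : Matrix (Fin (n + 2)) (Fin (n + 2)) R) (k : Fin (n + 1)) (h0 : A 0 0 = 0)
    (hrow : ∀ j ≠ k, A 0 j.succ = 0) (hcol : ∀ i ≠ k, A i.succ 0 = 0) :
    A.det = -(A 0 k.succ * A k.succ 0) *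
      (A.submatrix (fun i => (k.succAbove i).succ) fun j => (k.succAbove j).succ).det := by
  have hexpand_row : A.det =
      (-1) ^ (k.succ : ℕ) * A 0 k.succ * (A.submatrix Fin.succ k.succ.succAbove).det := by
    rw [Matrix.det_succ_row_zero, Fin.sum_univ_succ, h0, Finset.sum_eq_single_of_mem k (by simp)
      fun j _ hj => by rw [hrow j hj, mul_zero, zero_mul]]
    ring
  have hexpand_col : (A.submatrix Fin.succ k.succ.succAbove).det = (-1) ^ (k : ℕ) * A k.succ 0 *
      (A.submatrix (fun i => (k.succAbove i).succ) fun j => (k.succAbove j).succ).det := by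
    rw [Matrix.det_succ_column_zero, Finset.sum_eq_single_of_mem k (by simp) fun i _ hi => by
      rw [Matrix.submatrix_apply, Fin.succ_succAbove_zero, hcol i hi, mul_zero, zero_mul]]
    simp only [Matrix.submatrix_apply, Fin.succ_succAbove_zero, Matrix.submatrix_submatrix,
      Function.comp_def, Fin.succ_succAbove_succ]
  have hsign : (-1 : R) ^ (k : ℕ) * (-1) ^ (k : ℕ) = 1 := by
    rw [← pow_add, Even.neg_one_pow ⟨_, rfl⟩]
  rw [hexpand_row, hexpand_col, Fin.val_succ, pow_succ]
  linear_combination -(A 0 k.succ * A k.succ 0 * (A.submatrix (fun i => (k.succAbove i).succ)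
    fun j => (k.succAbove j).succ).det) * hsign

variable {R V : Type*} [CommRing R] [AddCommGroup V] [Module R V]

/-- The Pfaffian, in the guise of a family of alternating maps: for even `n`, `P n v` is the
Pfaffian of the matrix with `(i, j)` entry `B (v j) (v i)`, given by its expansion along the first
row. Odd `n` are unconstrained. -/
structure IsPfaffianFamily (B : LinearMap.BilinForm R V) (P : ∀ n, V [⋀^Fin n]→ₗ[R] R) : Prop where
  map_zero (v : Fin 0 → V) : P 0 v = 1
  map_add_two {n : ℕ} (hn : Even n) (v : Fin (n + 2) → V) :
    P (n + 2) v = ∑ k : Fin (n + 1),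
      (-1) ^ (k : ℕ) * (B (v k.succ) (v 0) * P n (k.removeNth (Fin.tail v)))

theorem IsPfaffianFamily.sq_eq_det_of_pivot {B : LinearMap.BilinForm R V}
    {P : ∀ n, V [⋀^Fin n]→ₗ[R] R} (hP : IsPfaffianFamily B P) (hB : B.IsAlt) {n : ℕ} (hn : Even n)
    (ih : ∀ v, P n v ^ 2 = (Matrix.of fun i j => B (v i) (v j)).det)
    (v : Fin (n + 2) → V) (k : Fin (n + 1)) (hk : ∀ j ≠ k, B (v j.succ) (v 0) = 0) :
    P (n + 2) v ^ 2 = (Matrix.of fun i j => B (v i) (v j)).det := by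
  have hP' : P (n + 2) v =
      (-1) ^ (k : ℕ) * (B (v k.succ) (v 0) * P n (k.removeNth (Fin.tail v))) := by
    rw [hP.map_add_two hn, Finset.sum_eq_single_of_mem k (Finset.mem_univ k)
      fun j _ hj => by rw [hk j hj, zero_mul, mul_zero]]
  have hdet := det_eq_neg_mul_mul_det_submatrix (Matrix.of fun i j => B (v i) (v j)) k
    (hB.self_eq_zero _) (fun j hj => by rw [Matrix.of_apply, ← hB.neg_eq, hk j hj, neg_zero]) hk
  rw [hP', mul_pow, mul_pow, ih, ← pow_mul', even_two_mul _ |>.neg_one_pow, hdet,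
    Matrix.of_apply, Matrix.of_apply, ← hB.neg_eq (v k.succ)]
  simp only [Matrix.submatrix, Matrix.of_apply, Fin.removeNth_apply, Fin.tail]
  ring

theorem IsPfaffianFamily.sq_eq_det {K : Type*} [Field K] [Module K V]
    {B : LinearMap.BilinForm K V} {P : ∀ n, V [⋀^Fin n]→ₗ[K] K} (hP : IsPfaffianFamily B P)
    (hB : B.IsAlt) {n : ℕ} (hn : Even n) (v : Fin n → V) :
    P n v ^ 2 = (Matrix.of fun i j => B (v i) (v j)).det := by
  induction n using Nat.twoStepInduction with
  | zero => rw [hP.map_zero, one_pow, Matrix.det_isEmpty]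
  | one => exact absurd hn Nat.not_even_one
  | more n ih _ =>
    replace hn : Even n := by simpa [Nat.even_add] using hn
    by_cases hzero : ∀ j : Fin (n + 1), B (v j.succ) (v 0) = 0
    · exact hP.sq_eq_det_of_pivot hB hn (ih hn) v 0 fun j _ => hzero j
    obtain ⟨k, hk⟩ := not_forall.1 hzero
    let c : Fin (n + 2) → K := Fin.cons 0
      (Function.update (fun j => -B (v j.succ) (v 0) / B (v k.succ) (v 0)) k 0)
    have hck : c k.succ = 0 := by simp only [c, Fin.cons_succ, Function.update_self]
    rw [← alternatingMap_map_add_smul (P (n + 2)) v hck, ← det_bilinForm_add_smul B v hck]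
    refine hP.sq_eq_det_of_pivot hB hn (ih hn) _ k fun j hj => ?_
    simp only [c, Fin.cons_zero, Fin.cons_succ, Function.update_of_ne hj, zero_smul, add_zero,
      map_add, map_smul, LinearMap.add_apply, LinearMap.smul_apply, smul_eq_mul,
      div_mul_cancel₀ _ hk, add_neg_cancel]

end PfaffianFamily

theorem integrable_intCast_mul {α 𝕜 : Type*} [MeasurableSpace α] [RCLike 𝕜] {μ : Measure α}
    {f : α → 𝕜} (hf : Integrable f μ) {s : α → ℤ} (hs : Measurable s) (hs1 : ∀ x, |s x| ≤ 1) :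
    Integrable (fun x => (s x : 𝕜) * f x) μ :=
  hf.bdd_mul (c := 1) (measurable_from_top.comp hs).aestronglyMeasurable <|
    .of_forall fun x => by
      rw [← RCLike.ofReal_intCast, RCLike.norm_ofReal]
      exact_mod_cast hs1 x

section PiIntegral

variable {α ι 𝕜 : Type*} [MeasurableSpace α] [Fintype ι] [RCLike 𝕜] {μ : Measure α} [SigmaFinite μ]

section Perm

variable {E : Type*} [NormedAddCommGroup E] (F : (ι → α) → E) (σ : Equiv.Perm ι)

theorem integrable_pi_comp_perm :
    Integrable (fun x => F (x ∘ σ)) (Measure.pi fun _ => μ) ↔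
      Integrable F (Measure.pi fun _ => μ) :=
  (measurePreserving_arrowCongr' (fun _ => μ) (fun _ => μ) σ.symm (MeasurableEquiv.refl α)
    fun _ => MeasurePreserving.id μ).integrable_comp_emb (MeasurableEquiv.measurableEmbedding _)

theorem integral_pi_comp_perm [NormedSpace ℝ E] :
    ∫ x, F (x ∘ σ) ∂Measure.pi (fun _ => μ) = ∫ x, F x ∂Measure.pi fun _ => μ :=
  (measurePreserving_arrowCongr' (fun _ => μ) (fun _ => μ) σ.symm (MeasurableEquiv.refl α)
    fun _ => MeasurePreserving.id μ).integral_comp' F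

end Perm

theorem integral_pi_mul_det [DecidableEq ι] {w : (ι → α) → 𝕜} {φ : ι → α → 𝕜}
    (hint : ∀ σ : Equiv.Perm ι,
      Integrable (fun x => w (x ∘ σ) * ∏ j, φ j (x j)) (Measure.pi fun _ => μ)) :
    ∫ x, w x * (Matrix.of fun j k => φ j (x k)).det ∂Measure.pi (fun _ => μ) =
      ∫ x, (∑ σ : Equiv.Perm ι, (Equiv.Perm.sign σ : 𝕜) * w (x ∘ σ)) * ∏ j, φ j (x j)
        ∂Measure.pi fun _ => μ := by
  let F (σ : Equiv.Perm ι) (x : ι → α) : 𝕜 := w x * ∏ j, φ (σ j) (x j)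
  have hF (σ : Equiv.Perm ι) (x : ι → α) : F σ (x ∘ σ) = w (x ∘ σ) * ∏ j, φ j (x j) :=
    congrArg (w (x ∘ σ) * ·) (Equiv.prod_comp σ fun j => φ j (x j))
  have hF_int (σ : Equiv.Perm ι) : Integrable (F σ) (Measure.pi fun _ => μ) :=
    (integrable_pi_comp_perm (F σ) σ).1 <| by simpa only [hF] using hint σ
  calc ∫ x, w x * (Matrix.of fun j k => φ j (x k)).det ∂Measure.pi (fun _ => μ)
      = ∫ x, ∑ σ : Equiv.Perm ι, (Equiv.Perm.sign σ : 𝕜) * F σ x ∂Measure.pi fun _ => μ := by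
        simp only [Matrix.det_apply', Matrix.of_apply, Finset.mul_sum, F, mul_left_comm (w _)]
    _ = ∑ σ : Equiv.Perm ι, (Equiv.Perm.sign σ : 𝕜) * ∫ x, F σ x ∂Measure.pi fun _ => μ := by
        rw [integral_finsetSum _ fun σ _ => (hF_int σ).const_mul _]
        simp only [integral_const_mul]
    _ = ∑ σ : Equiv.Perm ι, (Equiv.Perm.sign σ : 𝕜) *
          ∫ x, w (x ∘ σ) * ∏ j, φ j (x j) ∂Measure.pi fun _ => μ :=
        Finset.sum_congr rfl fun σ _ => by simp only [← integral_pi_comp_perm (F σ) σ, hF]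
    _ = ∫ x, (∑ σ : Equiv.Perm ι, (Equiv.Perm.sign σ : 𝕜) * w (x ∘ σ)) * ∏ j, φ j (x j)
          ∂Measure.pi fun _ => μ := by
        simp only [Finset.sum_mul, mul_assoc]
        rw [integral_finsetSum _ fun σ _ => (hint σ).const_mul _]
        simp only [integral_const_mul]

section RemoveNthTail

variable {n : ℕ} (k : Fin (n + 1)) {f : α × α → 𝕜} {g : (Fin n → α) → 𝕜}

theorem measurePreserving_pi_removeNth_tail :
    MeasurePreserving
      (fun x : Fin (n + 2) → α => ((x k.succ, x 0), k.removeNth (Fin.tail x)))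
      (Measure.pi fun _ => μ) ((μ.prod μ).prod (Measure.pi fun _ => μ)) :=
  (Measure.measurePreserving_swap.prod (MeasurePreserving.id _)).comp <|
    (measurePreserving_prodAssoc μ μ (Measure.pi fun _ => μ)).symm.comp <|
      ((MeasurePreserving.id μ).prod (measurePreserving_piFinSuccAbove (fun _ => μ) k)).comp <|
        measurePreserving_piFinSuccAbove (fun _ => μ) 0

theorem integrable_pi_mul_removeNth_tail (hf : Integrable f (μ.prod μ))
    (hg : Integrable g (Measure.pi fun _ => μ)) :
    Integrable (fun x : Fin (n + 2) → α => f (x k.succ, x 0) * g (k.removeNth (Fin.tail x)))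
      (Measure.pi fun _ => μ) :=
  (measurePreserving_pi_removeNth_tail k).integrable_comp_of_integrable (hf.mul_prod hg)

theorem integral_pi_mul_removeNth_tail (hf : Integrable f (μ.prod μ))
    (hg : Integrable g (Measure.pi fun _ => μ)) :
    ∫ x : Fin (n + 2) → α, f (x k.succ, x 0) * g (k.removeNth (Fin.tail x))
        ∂Measure.pi (fun _ => μ) =
      (∫ z, f z ∂μ.prod μ) * ∫ y, g y ∂Measure.pi fun _ => μ := by
  have hmp := measurePreserving_pi_removeNth_tail (μ := μ) k
  have hfg : AEStronglyMeasurable (fun p : (α × α) × (Fin n → α) => f p.1 * g p.2)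
      (Measure.map _ _) := hmp.map_eq ▸ (hf.mul_prod hg).aestronglyMeasurable
  rw [← integral_prod_mul, ← hmp.map_eq, integral_map hmp.aemeasurable hfg]

end RemoveNthTail

end PiIntegral

section IntegrableSubmodule

variable {α ι : Type*} [MeasurableSpace α] [Fintype ι] (𝕜 : Type*) [RCLike 𝕜] (μ : Measure α)

/-- The space of `μ`-integrable functions. They are not identified up to a.e. equality, so that
pointwise evaluation makes sense. -/
def integrableSubmodule : Submodule 𝕜 (α → 𝕜) where
  carrier := {f | Integrable f μ}
  zero_mem' := integrable_zero α 𝕜 μ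
  add_mem' := Integrable.add
  smul_mem' c _ := Integrable.smul c

/-- The product `∏ j, φ j (x j)` as a multilinear map in the family `φ` of integrable functions. -/
def prodEval (x : ι → α) : MultilinearMap 𝕜 (fun _ : ι => integrableSubmodule 𝕜 μ) 𝕜 :=
  (MultilinearMap.mkPiAlgebra 𝕜 ι 𝕜).compLinearMap fun j =>
    LinearMap.proj (x j) ∘ₗ (integrableSubmodule 𝕜 μ).subtype

theorem prodEval_apply (x : ι → α) (φ : ι → integrableSubmodule 𝕜 μ) :
    prodEval 𝕜 μ x φ = ∏ j, (φ j : α → 𝕜) (x j) :=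
  rfl

end IntegrableSubmodule

section OrderedIntegral

variable {α 𝕜 : Type*} [RCLike 𝕜] [LinearOrder α] [TopologicalSpace α] [OrderClosedTopology α]
  [SecondCountableTopology α] [MeasurableSpace α] [OpensMeasurableSpace α] {μ : Measure α}

theorem measurable_orderSign : Measurable fun z : α × α => orderSign z.1 z.2 :=
  .ite (measurableSet_lt measurable_fst measurable_snd) measurable_const <|
    .ite (measurableSet_lt measurable_snd measurable_fst) measurable_const measurable_const

theorem measurable_sortSign {n : ℕ} : Measurable (sortSign : (Fin n → α) → ℤ) :=
  Finset.measurable_prod _ fun i _ => Finset.measurable_prod _ fun j _ =>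
    measurable_orderSign.comp ((measurable_pi_apply j).prodMk (measurable_pi_apply i))

theorem integrable_orderSign_mul_mul {f g : α → 𝕜} (hf : Integrable f μ) (hg : Integrable g μ) :
    Integrable (fun z : α × α => (orderSign z.1 z.2 : 𝕜) * (f z.1 * g z.2)) (μ.prod μ) :=
  integrable_intCast_mul (hf.mul_prod hg) measurable_orderSign fun _ => abs_orderSign_le_one _ _

variable (𝕜 μ) in
/-- The bilinear form `∫∫ sgn(x - y) f(x) g(y) dμ(x) dμ(y)` on integrable functions. It is defined
by an integral over `μ.prod μ`; see `orderSignForm_apply` for the iterated integral. -/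
noncomputable def orderSignForm : LinearMap.BilinForm 𝕜 (integrableSubmodule 𝕜 μ) :=
  LinearMap.mk₂ 𝕜
    (fun f g => ∫ z, (orderSign z.1 z.2 : 𝕜) * ((f : α → 𝕜) z.1 * (g : α → 𝕜) z.2) ∂μ.prod μ)
    (fun f f' g => by
      rw [← integral_add (integrable_orderSign_mul_mul f.2 g.2)
        (integrable_orderSign_mul_mul f'.2 g.2)]
      simp only [Submodule.coe_add, Pi.add_apply, add_mul, mul_add])
    (fun c f g => by
      rw [smul_eq_mul, ← integral_const_mul]
      simp only [Submodule.coe_smul, Pi.smul_apply, smul_eq_mul, mul_assoc, mul_left_comm c])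
    (fun f g g' => by
      rw [← integral_add (integrable_orderSign_mul_mul f.2 g.2)
        (integrable_orderSign_mul_mul f.2 g'.2)]
      simp only [Submodule.coe_add, Pi.add_apply, mul_add])
    (fun c f g => by
      rw [smul_eq_mul, ← integral_const_mul]
      simp only [Submodule.coe_smul, Pi.smul_apply, smul_eq_mul, mul_left_comm c])

theorem orderSignForm_apply [SFinite μ] (f g : integrableSubmodule 𝕜 μ) :
    orderSignForm 𝕜 μ f g =
      ∫ x, ∫ y, (orderSign x y : 𝕜) * ((f : α → 𝕜) x * (g : α → 𝕜) y) ∂μ ∂μ :=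
  integral_prod _ (integrable_orderSign_mul_mul f.2 g.2)

theorem isAlt_orderSignForm [SFinite μ] : (orderSignForm 𝕜 μ).IsAlt := fun f => by
  refine self_eq_neg.1 <| (integral_prod_swap _).symm.trans (Eq.trans ?_ (integral_neg _))
  simp only [Prod.fst_swap, Prod.snd_swap, orderSign_swap (Prod.snd _), Int.cast_neg, neg_mul,
    mul_comm ((f : α → 𝕜) (Prod.snd _))]

variable [SigmaFinite μ]

theorem integrable_sortSign_mul_prod {n : ℕ} {φ : Fin n → α → 𝕜} (hφ : ∀ j, Integrable (φ j) μ) :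
    Integrable (fun x => (sortSign x : 𝕜) * ∏ j, φ j (x j)) (Measure.pi fun _ => μ) :=
  integrable_intCast_mul (.fintype_prod hφ) measurable_sortSign abs_sortSign_le_one

variable (𝕜 μ) in
/-- The integral of `∏ j, φ j (x j)` against the sign of the permutation sorting `x`, as an
alternating map in `φ`. By `setIntegral_monotone_det` it is de Bruijn's ordered integral. -/
noncomputable def sortSignIntegral (n : ℕ) : integrableSubmodule 𝕜 μ [⋀^Fin n]→ₗ[𝕜] 𝕜 where
  toFun φ := ∫ x, (sortSign x : 𝕜) * ∏ j, (φ j : α → 𝕜) (x j) ∂Measure.pi fun _ => μ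
  map_update_add' φ i f g := by
    rw [← integral_add (integrable_sortSign_mul_prod fun j => (Function.update φ i f j).2)
      (integrable_sortSign_mul_prod fun j => (Function.update φ i g j).2)]
    simp only [← prodEval_apply, MultilinearMap.map_update_add, mul_add]
  map_update_smul' φ i c f := by
    rw [smul_eq_mul, ← integral_const_mul]
    simp only [← prodEval_apply, MultilinearMap.map_update_smul, smul_eq_mul, mul_left_comm c]
  map_eq_zero_of_eq' φ i j hφ hij := by
    refine self_eq_neg.1 <| (integral_pi_comp_perm _ (Equiv.swap i j)).symm.trans
      (Eq.trans ?_ (integral_neg _))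
    have hprod (x : Fin n → α) :
        ∏ l, (φ l : α → 𝕜) (x (Equiv.swap i j l)) = ∏ l, (φ l : α → 𝕜) (x l) :=
      Fintype.prod_equiv (Equiv.swap i j) _ _ fun l => by rw [Equiv.apply_swap_eq_self hφ]
    simp only [isAntisymmetric_sortSign _ (Equiv.swap i j), Equiv.Perm.sign_swap hij,
      Function.comp_apply, hprod, Units.neg_smul, one_smul, Int.cast_neg, neg_mul]

theorem sortSignIntegral_apply {n : ℕ} (φ : Fin n → integrableSubmodule 𝕜 μ) :
    sortSignIntegral 𝕜 μ n φ =
      ∫ x, (sortSign x : 𝕜) * ∏ j, (φ j : α → 𝕜) (x j) ∂Measure.pi fun _ => μ :=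
  rfl

theorem setIntegral_monotone_det {n : ℕ} (φ : Fin n → integrableSubmodule 𝕜 μ) :
    ∫ x in {x : Fin n → α | Monotone x}, (Matrix.of fun j k => (φ j : α → 𝕜) (x k)).det
      ∂(Measure.pi fun _ => μ) = sortSignIntegral 𝕜 μ n φ := by
  let M : Set (Fin n → α) := {x | Monotone x}
  have hM : MeasurableSet M := isClosed_monotone.measurableSet
  let w (x : Fin n → α) : ℤ := M.indicator 1 x
  have hw (x : Fin n → α) : |w x| ≤ 1 := by
    by_cases hx : x ∈ M <;> simp [w, hx]
  have hw_perm (σ : Equiv.Perm (Fin n)) : Measurable fun x => w (x ∘ σ) :=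
    (measurable_one.indicator hM).comp <| measurable_pi_lambda _ fun _ => measurable_pi_apply _
  have hsum (x : Fin n → α) :
      ∑ σ : Equiv.Perm (Fin n), (Equiv.Perm.sign σ : 𝕜) * (w (x ∘ σ) : 𝕜) = sortSign x := by
    rw [← sum_sign_smul_indicator_monotone]
    simp only [Int.cast_sum, Units.smul_def, smul_eq_mul, Int.cast_mul, w, M]
  calc ∫ x in M, (Matrix.of fun j k => (φ j : α → 𝕜) (x k)).det ∂(Measure.pi fun _ => μ)
      = ∫ x, (w x : 𝕜) * (Matrix.of fun j k => (φ j : α → 𝕜) (x k)).det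
          ∂(Measure.pi fun _ => μ) := by
        rw [← integral_indicator hM]
        congr with x
        by_cases hx : x ∈ M <;> simp [w, hx]
    _ = sortSignIntegral 𝕜 μ n φ := by
        rw [integral_pi_mul_det fun σ => integrable_intCast_mul (.fintype_prod fun j => (φ j).2)
          (hw_perm σ) fun _ => hw _]
        simp only [hsum, sortSignIntegral_apply]

theorem isPfaffianFamily_sortSignIntegral :
    IsPfaffianFamily (orderSignForm 𝕜 μ) (sortSignIntegral 𝕜 μ) where
  map_zero v := by
    simp [sortSignIntegral_apply, sortSign, Measure.real]
  map_add_two {n} hn v := by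
    let f (k : Fin (n + 1)) (z : α × α) : 𝕜 :=
      (orderSign z.1 z.2 : 𝕜) * ((v k.succ : α → 𝕜) z.1 * (v 0 : α → 𝕜) z.2)
    let g (k : Fin (n + 1)) (y : Fin n → α) : 𝕜 :=
      (sortSign y : 𝕜) * ∏ j, (k.removeNth (Fin.tail v) j : α → 𝕜) (y j)
    have hf (k : Fin (n + 1)) : Integrable (f k) (μ.prod μ) :=
      integrable_orderSign_mul_mul (v k.succ).2 (v 0).2
    have hg (k : Fin (n + 1)) : Integrable (g k) (Measure.pi fun _ => μ) :=
      integrable_sortSign_mul_prod fun j => (k.removeNth (Fin.tail v) j).2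
    have hexpand (x : Fin (n + 2) → α) : (sortSign x : 𝕜) * ∏ j, (v j : α → 𝕜) (x j) =
        ∑ k : Fin (n + 1),
          (-1) ^ (k : ℕ) * (f k (x k.succ, x 0) * g k (k.removeNth (Fin.tail x))) := by
      conv_lhs => rw [← Fin.cons_self_tail x, sortSign_cons_of_odd hn.add_one]
      push_cast
      rw [Finset.sum_mul]
      refine Finset.sum_congr rfl fun k _ => ?_
      rw [Fin.prod_univ_succ, Fin.prod_univ_succAbove _ k]
      simp only [f, g, Fin.cons_zero, Fin.cons_succ, Fin.tail, Fin.removeNth]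
      ring
    simp only [sortSignIntegral_apply, hexpand]
    rw [integral_finsetSum _ fun k _ =>
      (integrable_pi_mul_removeNth_tail k (hf k) (hg k)).const_mul _]
    refine Finset.sum_congr rfl fun k _ => ?_
    rw [integral_const_mul, integral_pi_mul_removeNth_tail k (hf k) (hg k)]
    rfl

end OrderedIntegral

theorem deBruijn_ordered_sq_general {α 𝕜 : Type*} [RCLike 𝕜] [LinearOrder α] [TopologicalSpace α]
    [OrderClosedTopology α] [SecondCountableTopology α] [MeasurableSpace α]
    [OpensMeasurableSpace α] {μ : Measure α} [SigmaFinite μ] {N : ℕ} (hN : Even N)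
    {φ : Fin N → α → 𝕜} (hφ : ∀ j, Integrable (φ j) μ) :
    (∫ x in {x : Fin N → α | Monotone x},
        (Matrix.of fun j k : Fin N => φ j (x k)).det ∂(Measure.pi fun _ => μ)) ^ 2
      = (Matrix.of fun j k : Fin N =>
          ∫ x, ∫ y, (orderSign x y : 𝕜) * (φ j x * φ k y) ∂μ ∂μ).det := by
  let ψ (j : Fin N) : integrableSubmodule 𝕜 μ := ⟨φ j, hφ j⟩
  rw [setIntegral_monotone_det ψ,
    isPfaffianFamily_sortSignIntegral.sq_eq_det isAlt_orderSignForm hN]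
  simp only [orderSignForm_apply, ψ]

/-- The square of de Bruijn's second integral identity (ordered integral as a Pfaffian,
squared to give a determinant). -/
theorem deBruijn_ordered_sq (N : ℕ) (hN : 0 < N) (hNeven : Even N)
    (μ : Measure ℝ) [SigmaFinite μ]
    (φ : Fin N → ℝ → ℝ) (hmeas : ∀ j, Measurable (φ j)) (hint : ∀ j, Integrable (φ j) μ)
    (hdet : IntegrableOn
      (fun x : Fin N → ℝ => (Matrix.of fun j k : Fin N => φ j (x k)).det)
      {x : Fin N → ℝ | Monotone x} (Measure.pi fun _ => μ)) :
    (∫ x in {x : Fin N → ℝ | Monotone x},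
        (Matrix.of fun j k : Fin N => φ j (x k)).det ∂(Measure.pi fun _ => μ)) ^ 2
      = (Matrix.of fun j k : Fin N =>
          ∫ x, ∫ y, Real.sign (x - y) * (φ j x * φ k y) ∂μ ∂μ).det := by
  simpa only [cast_orderSign_real] using deBruijn_ordered_sq_general hNeven hint
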